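/- arXiv:2310.16228 — 4 statements merged into one kernel-verified Lean document; each statement's English description precedes it below -/
import Mathlib

section
/- Let v = (a₁μ₁, a₂μ₂) ∈ ℝ² with v ≠ 0, let p = ½·δ_v + ½·δ_{−v}, and let k be the approximate ReLU kernel with a* = 815/3072. Suppose λ ≠ 0 and φ : ℝ² → ℝ is not identically zero and satisfies, for every x ∈ ℝ², ∫ k(x, z) · φ(z) dp(z) = λ · φ(x). Then λ = 2·a*·‖v‖². In particular the approximate ReLU kernel operator under p has no nonzero eigenvalue other than 2·a*·‖v‖². -/
open MeasureTheory RealInnerProductSpace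
open scoped ENNReal

/-!
For a two-point measure and a kernel vanishing between the two points, the eigenvalue equation
decouples: at each point it equates `lam` to the weighted diagonal value of the kernel, unless the
eigenfunction vanishes there. It cannot vanish at both points, since its values everywhere are
`lam⁻¹` times an integral over the two points. For the ReLU kernel the points `v` and `-v` are
decoupled because the angle between them is `π`, where `1 + cos` vanishes.
-/

section TwoPointMeasure

variable {X : Type*} [MeasurableSpace X]

/-- `φ` is an eigenfunction, with eigenvalue `lam`, of the integral operator with kernel `k` under
the measure `p`. The equation is required at every point, not merely `p`-almost everywhere, and `φ`
is only required not to be identically zero. -/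
def IsKernelEigenfunction (k : X → X → ℝ) (p : Measure X) (lam : ℝ) (φ : X → ℝ) : Prop :=
  (∃ x, φ x ≠ 0) ∧ ∀ x, ∫ z, k x z * φ z ∂p = lam * φ x

variable {k : X → X → ℝ} {lam : ℝ} {φ : X → ℝ}

theorem IsKernelEigenfunction.not_ae_eq_zero {p : Measure X}
    (h : IsKernelEigenfunction k p lam φ) (hlam : lam ≠ 0) : ¬ φ =ᵐ[p] 0 := by
  intro hφ
  obtain ⟨⟨x, hx⟩, heig⟩ := h
  have hintegral : ∫ z, k x z * φ z ∂p = 0 :=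
    integral_eq_zero_of_ae (hφ.mono fun z hz ↦ mul_eq_zero_of_right (k x z) hz)
  exact mul_ne_zero hlam hx ((heig x).symm.trans hintegral)

variable [MeasurableSingletonClass X]

theorem integral_smul_dirac_add_smul_dirac {F : Type*} [NormedAddCommGroup F] [NormedSpace ℝ F]
    [CompleteSpace F] {s t : ℝ≥0∞} (hs : s ≠ ∞) (ht : t ≠ ∞) (y z : X) (f : X → F) :
    ∫ x, f x ∂(s • Measure.dirac y + t • Measure.dirac z) = s.toReal • f y + t.toReal • f z := by
  have integrable_smul_dirac {c : ℝ≥0∞} (hc : c ≠ ∞) (w : X) :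
      Integrable f (c • Measure.dirac w) :=
    (integrable_dirac enorm_lt_top).smul_measure hc
  rw [integral_add_measure (integrable_smul_dirac hs y) (integrable_smul_dirac ht z),
    integral_smul_measure, integral_smul_measure, integral_dirac, integral_dirac]

variable {s t : ℝ≥0∞} {y z : X}

theorem IsKernelEigenfunction.apply_ne_zero_or_apply_ne_zero
    (h : IsKernelEigenfunction k (s • Measure.dirac y + t • Measure.dirac z) lam φ)
    (hlam : lam ≠ 0) : φ y ≠ 0 ∨ φ z ≠ 0 := by
  by_contra! hzero
  have ae_eq_zero_dirac {w : X} (hw : φ w = 0) (c : ℝ≥0∞) : φ =ᵐ[c • Measure.dirac w] 0 :=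
    Measure.ae_smul_measure ((ae_eq_dirac φ).trans (by rw [hw]; rfl)) c
  exact h.not_ae_eq_zero hlam <| ae_add_measure_iff.mpr
    ⟨ae_eq_zero_dirac hzero.1 s, ae_eq_zero_dirac hzero.2 t⟩

theorem IsKernelEigenfunction.eigenvalue_eq_or_eq
    (h : IsKernelEigenfunction k (s • Measure.dirac y + t • Measure.dirac z) lam φ)
    (hs : s ≠ ∞) (ht : t ≠ ∞) (hlam : lam ≠ 0) (hyz : k y z = 0) (hzy : k z y = 0) :
    lam = s.toReal * k y y ∨ lam = t.toReal * k z z := by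
  have eq_at (x : X) :
      s.toReal * (k x y * φ y) + t.toReal * (k x z * φ z) = lam * φ x := by
    rw [← h.2 x, integral_smul_dirac_add_smul_dirac hs ht, smul_eq_mul, smul_eq_mul]
  refine (h.apply_ne_zero_or_apply_ne_zero hlam).imp (fun hy ↦ ?_) (fun hz ↦ ?_)
  · apply mul_right_cancel₀ hy
    linear_combination -eq_at y + t.toReal * φ z * hyz
  · apply mul_right_cancel₀ hz
    linear_combination -eq_at z + s.toReal * φ y * hzy

end TwoPointMeasure

section ApproxReluKernel

variable {E : Type*} [NormedAddCommGroup E] [InnerProductSpace ℝ E]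

/-- The approximate ReLU kernel `a‖x‖‖z‖(1 + ⟨x/‖x‖, z/‖z‖⟩)²`, with an arbitrary leading
coefficient `a` in place of `815/3072`. Since `0⁻¹ = 0`, the normalization of `0` is `0`. -/
noncomputable def approxReluKernel (a : ℝ) (x z : E) : ℝ :=
  a * ‖x‖ * ‖z‖ * (1 + ⟪‖x‖⁻¹ • x, ‖z‖⁻¹ • z⟫) ^ 2

theorem approxReluKernel_eq_cos_angle (a : ℝ) (x z : E) :
    approxReluKernel a x z =
      a * ‖x‖ * ‖z‖ * (1 + Real.cos (InnerProductGeometry.angle x z)) ^ 2 := by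
  rw [approxReluKernel, InnerProductGeometry.cos_angle, real_inner_smul_left,
    real_inner_smul_right]
  ring

theorem approxReluKernel_self (a : ℝ) (x : E) : approxReluKernel a x x = 4 * a * ‖x‖ ^ 2 := by
  rw [approxReluKernel_eq_cos_angle]
  rcases eq_or_ne x 0 with rfl | hx
  · simp
  · rw [InnerProductGeometry.angle_self hx, Real.cos_zero]
    ring

theorem approxReluKernel_self_neg (a : ℝ) (x : E) : approxReluKernel a x (-x) = 0 := by
  rw [approxReluKernel_eq_cos_angle]
  rcases eq_or_ne x 0 with rfl | hx
  · simp
  · rw [InnerProductGeometry.angle_self_neg_of_nonzero hx, Real.cos_pi]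
    ring

theorem approxReluKernel_neg_self (a : ℝ) (x : E) : approxReluKernel a (-x) x = 0 := by
  simpa only [neg_neg] using approxReluKernel_self_neg a (-x)

theorem relu_kernel_unique_eigenvalue_general [MeasurableSpace E] [MeasurableSingletonClass E]
    {a lam : ℝ} {v : E} {φ : E → ℝ} (hlam : lam ≠ 0)
    (h : IsKernelEigenfunction (approxReluKernel a)
      ((1 / 2 : ℝ≥0∞) • Measure.dirac v + (1 / 2 : ℝ≥0∞) • Measure.dirac (-v)) lam φ) :
    lam = 2 * a * ‖v‖ ^ 2 := by
  have half_ne_top : (1 / 2 : ℝ≥0∞) ≠ ∞ := by simp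
  have half_toReal : (1 / 2 : ℝ≥0∞).toReal = 1 / 2 := by simp
  have hlam_eq := h.eigenvalue_eq_or_eq half_ne_top half_ne_top hlam
    (approxReluKernel_self_neg a v) (approxReluKernel_neg_self a v)
  rw [approxReluKernel_self, approxReluKernel_self, norm_neg, or_self, half_toReal] at hlam_eq
  linear_combination hlam_eq

end ApproxReluKernel

/-- **Uniqueness of the nonzero eigenvalue of the approximate ReLU kernel.**
With `v = (a₁μ₁, a₂μ₂) ≠ 0`, `p = ½·δ_v + ½·δ_{-v}`, `a* = 815/3072` and
`k(x,z) = a*‖x‖‖z‖(1 + ⟨x/‖x‖, z/‖z‖⟩)²` (with `x/‖x‖ := 0` for `x = 0`),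
any nonzero eigenvalue of the kernel operator equals `2·a*·‖v‖²`. -/
theorem relu_kernel_unique_eigenvalue
    (a₁ a₂ μ₁ μ₂ : ℝ) (ha₁ : 0 < a₁) (ha₂ : 0 < a₂)
    (v : EuclideanSpace ℝ (Fin 2))
    (hv : v = (WithLp.equiv 2 (Fin 2 → ℝ)).symm ![a₁ * μ₁, a₂ * μ₂])
    (hvne : v ≠ 0)
    (p : Measure (EuclideanSpace ℝ (Fin 2)))
    (hp : p = (1/2 : ℝ≥0∞) • Measure.dirac v + (1/2 : ℝ≥0∞) • Measure.dirac (-v))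
    (k : EuclideanSpace ℝ (Fin 2) → EuclideanSpace ℝ (Fin 2) → ℝ)
    (hk : ∀ x z, k x z =
      (815/3072 : ℝ) * ‖x‖ * ‖z‖ * (1 + ⟪‖x‖⁻¹ • x, ‖z‖⁻¹ • z⟫) ^ 2)
    (lam : ℝ) (hlam : lam ≠ 0)
    (φ : EuclideanSpace ℝ (Fin 2) → ℝ)
    (hφne : ∃ x, φ x ≠ 0)
    (heig : ∀ x, ∫ z, k x z * φ z ∂p = lam * φ x) :
    lam = 2 * (815/3072 : ℝ) * ‖v‖ ^ 2 := by
  obtain rfl : k = approxReluKernel (815 / 3072) := funext₂ hk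
  exact relu_kernel_unique_eigenvalue_general hlam ⟨hφne, hp ▸ heig⟩
end

section
/- Let h(u) := (1/π)·(u·(π − arccos(u)) + √(1 − u²)) and for a ∈ ℝ let e_a := ∫_{−1}^{1} (h(u) − a·(1+u)²)² du. Then a ↦ e_a has a unique minimizer at a* = 815/3072; that is, for every a ≠ 815/3072 one has e_{815/3072} < e_a. -/
/-!
If `⟨f, g⟩ = a ⟨g, g⟩` in `L²`, then `‖f - c g‖² = ‖f - a g‖² + (c - a)² ‖g‖²` by Pythagoras, so the
minimizer is `⟨h, g⟩ / ⟨g, g⟩` with `g u = (1 + u)²`. To compute `⟨h, g⟩`, substitute `u = cos θ`: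
then `π h (cos θ) = (π - θ) cos θ + sin θ` has derivative `-(π - θ) sin θ`, so integrating `h * G''`
by parts twice leaves only boundary terms and the integral of `G (cos θ)` over `[0, π]`. For `G` a
power of `1 + u`, the half-angle formula `1 + cos θ = 2 cos² (θ / 2)` turns the latter into a Wallis
integral.
-/

open MeasureTheory intervalIntegral Real Set

section LeastSquares

variable {α : Type*} [MeasurableSpace α] {μ : Measure α} {f g : α → ℝ} {a c : ℝ}

theorem integral_sq_sub_mul_eq_add (hf : MemLp f 2 μ) (hg : MemLp g 2 μ)
    (ha : ∫ x, f x * g x ∂μ = a * ∫ x, g x ^ 2 ∂μ) (c : ℝ) :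
    ∫ x, (f x - c * g x) ^ 2 ∂μ =
      ∫ x, (f x - a * g x) ^ 2 ∂μ + (c - a) ^ 2 * ∫ x, g x ^ 2 ∂μ := by
  have expand (t : ℝ) : ∫ x, (f x - t * g x) ^ 2 ∂μ =
      ∫ x, f x ^ 2 ∂μ - 2 * t * ∫ x, f x * g x ∂μ + t ^ 2 * ∫ x, g x ^ 2 ∂μ := by
    have hff := hf.integrable_sq
    have hfg : Integrable (fun x => 2 * t * (f x * g x)) μ :=
      (hf.integrable_mul hg).const_mul (2 * t)
    have hgg := hg.integrable_sq.const_mul (t ^ 2)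
    rw [← MeasureTheory.integral_const_mul, ← MeasureTheory.integral_const_mul,
      ← MeasureTheory.integral_sub hff hfg, ← MeasureTheory.integral_add (by exact hff.sub hfg) hgg]
    congr 1 with x
    ring
  rw [expand, expand, ha]
  ring

theorem integral_sq_sub_mul_lt (hf : MemLp f 2 μ) (hg : MemLp g 2 μ)
    (hg_pos : 0 < ∫ x, g x ^ 2 ∂μ) (ha : ∫ x, f x * g x ∂μ = a * ∫ x, g x ^ 2 ∂μ)
    (hca : c ≠ a) :
    ∫ x, (f x - a * g x) ^ 2 ∂μ < ∫ x, (f x - c * g x) ^ 2 ∂μ := by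
  rw [integral_sq_sub_mul_eq_add hf hg ha c]
  exact lt_add_of_pos_right _ (mul_pos (sq_pos_of_ne_zero (sub_ne_zero.mpr hca)) hg_pos)

theorem intervalIntegral_sq_sub_mul_lt {μ : Measure ℝ} [IsFiniteMeasureOnCompacts μ]
    {f g : ℝ → ℝ} {x y : ℝ} (hxy : x ≤ y)
    (hf : ContinuousOn f (Icc x y)) (hg : ContinuousOn g (Icc x y))
    (hg_pos : 0 < ∫ u in x..y, g u ^ 2 ∂μ)
    (ha : ∫ u in x..y, f u * g u ∂μ = a * ∫ u in x..y, g u ^ 2 ∂μ) (hca : c ≠ a) :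
    ∫ u in x..y, (f u - a * g u) ^ 2 ∂μ < ∫ u in x..y, (f u - c * g u) ^ 2 ∂μ := by
  have memLp_two {k : ℝ → ℝ} (hk : ContinuousOn k (Icc x y)) : MemLp k 2 (μ.restrict (Ioc x y)) :=
    (memLp_two_iff_integrable_sq <| (hk.mono Ioc_subset_Icc_self).aestronglyMeasurable
      measurableSet_Ioc).mpr ((hk.pow 2).integrableOn_Icc.mono_set Ioc_subset_Icc_self)
  simp only [integral_of_le hxy] at hg_pos ha ⊢
  exact integral_sq_sub_mul_lt (memLp_two hf) (memLp_two hg) hg_pos ha hca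

end LeastSquares

section CosineSubstitution

theorem integral_eq_integral_sin_smul_comp_cos {E : Type*} [NormedAddCommGroup E]
    [NormedSpace ℝ E] (f : ℝ → E) :
    ∫ u in (-1)..1, f u = ∫ θ in 0..π, sin θ • f (cos θ) := by
  have hsub := integral_deriv_smul_comp_of_deriv_nonpos (g := f) continuousOn_cos
    (fun θ _ => hasDerivAt_cos θ) (a := 0) (b := π) fun θ hθ => by
      rw [min_eq_left pi_pos.le, max_eq_right pi_pos.le] at hθ
      exact neg_nonpos.mpr (sin_nonneg_of_mem_Icc (Ioo_subset_Icc_self hθ))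
  rw [cos_zero, cos_pi] at hsub
  rw [integral_symm, ← hsub, ← intervalIntegral.integral_neg]
  simp only [Function.comp_apply, neg_smul, neg_neg]

theorem integral_one_add_cos_pow (n : ℕ) :
    ∫ θ in 0..π, (1 + cos θ) ^ n =
      2 ^ n * π * ∏ i ∈ Finset.range n, (2 * (i : ℝ) + 1) / (2 * i + 2) :=
  calc ∫ θ in 0..π, (1 + cos θ) ^ n
    _ = ∫ θ in 0..π, 2 ^ n * cos (θ / 2) ^ (2 * n) := by
      congr 1 with θ
      rw [pow_mul, ← mul_pow, cos_sq, mul_div_cancel₀ θ two_ne_zero]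
      ring
    _ = 2 ^ n * (2 * ∫ θ in 0..π / 2, cos θ ^ (2 * n)) := by
      rw [intervalIntegral.integral_const_mul,
        integral_comp_div (fun θ => cos θ ^ (2 * n)) two_ne_zero, zero_div, smul_eq_mul]
    _ = _ := by
      rw [EulerSine.integral_cos_pow_eq, integral_sin_pow_even]
      ring

end CosineSubstitution

/-- The arc-cosine kernel of order one, i.e. the kernel of a two-layer ReLU network, as a function
of the cosine `u` of the angle between its two inputs. -/
noncomputable def arcCosineProfile (u : ℝ) : ℝ :=
  1 / π * (u * (π - arccos u) + √(1 - u ^ 2))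

namespace arcCosineProfile

protected theorem continuous : Continuous arcCosineProfile := by
  unfold arcCosineProfile
  fun_prop

theorem apply_cos {θ : ℝ} (hθ : θ ∈ Icc 0 π) :
    arcCosineProfile (cos θ) = ((π - θ) * cos θ + sin θ) / π := by
  rw [arcCosineProfile, arccos_cos hθ.1 hθ.2, ← sin_sq, sqrt_sq (sin_nonneg_of_mem_Icc hθ)]
  ring

/- The antiderivative is read off from integrating `((π - θ) cos θ + sin θ) * (G'' (cos θ) sin θ)`
by parts twice. -/
theorem hasDerivAt_boundary_terms {G G' : ℝ → ℝ} {G''u θ : ℝ}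
    (hG : HasDerivAt G (G' (cos θ)) (cos θ)) (hG' : HasDerivAt G' G''u (cos θ)) :
    HasDerivAt (fun θ => (π - θ) * G (cos θ) - ((π - θ) * cos θ + sin θ) * G' (cos θ))
      (((π - θ) * cos θ + sin θ) * G''u * sin θ - G (cos θ)) θ := by
  have hcos := hasDerivAt_cos θ
  have hlin := (hasDerivAt_id' θ).const_sub π
  have hprofile : HasDerivAt (fun θ => (π - θ) * cos θ + sin θ) (-(π - θ) * sin θ) θ :=
    ((hlin.mul hcos).add (hasDerivAt_sin θ)).congr_deriv (by ring)
  exact ((hlin.mul (hG.comp θ hcos)).sub (hprofile.mul (hG'.comp θ hcos))).congr_deriv (by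
    simp only [Function.comp_apply]
    ring)

theorem integral_mul_second_deriv {G G' G'' : ℝ → ℝ}
    (hG : ∀ u ∈ Icc (-1) 1, HasDerivAt G (G' u) u)
    (hG' : ∀ u ∈ Icc (-1) 1, HasDerivAt G' (G'' u) u)
    (hG'' : ContinuousOn G'' (Icc (-1) 1)) :
    ∫ u in (-1)..1, arcCosineProfile u * G'' u =
      G' 1 - G 1 + (∫ θ in 0..π, G (cos θ)) / π := by
  have continuous_comp_cos {k : ℝ → ℝ} (hk : ContinuousOn k (Icc (-1) 1)) :
      Continuous fun θ => k (cos θ) := hk.comp_continuous continuous_cos cos_mem_Icc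
  have hG_cont := continuous_comp_cos (HasDerivAt.continuousOn hG)
  have hprofile_cont : Continuous fun θ => ((π - θ) * cos θ + sin θ) * G'' (cos θ) * sin θ :=
    (Continuous.mul (by fun_prop) (continuous_comp_cos hG'')).mul continuous_sin
  have by_parts : ∫ θ in 0..π, (((π - θ) * cos θ + sin θ) * G'' (cos θ) * sin θ - G (cos θ)) =
      π * (G' 1 - G 1) := by
    rw [integral_eq_sub_of_hasDerivAt
      (fun θ _ => hasDerivAt_boundary_terms (hG _ (cos_mem_Icc θ)) (hG' _ (cos_mem_Icc θ)))
      ((hprofile_cont.sub hG_cont).intervalIntegrable _ _)]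
    simp only [sub_self, zero_mul, sin_pi, add_zero, sub_zero, cos_zero, sin_zero, mul_one]
    ring
  rw [intervalIntegral.integral_sub (hprofile_cont.intervalIntegrable _ _)
    (hG_cont.intervalIntegrable _ _), sub_eq_iff_eq_add] at by_parts
  calc ∫ u in (-1)..1, arcCosineProfile u * G'' u
    _ = ∫ θ in 0..π, ((π - θ) * cos θ + sin θ) * G'' (cos θ) * sin θ / π := by
      rw [integral_eq_integral_sin_smul_comp_cos]
      refine integral_congr fun θ hθ => ?_
      rw [uIcc_of_le pi_pos.le] at hθ
      simp only [apply_cos hθ, smul_eq_mul]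
      ring
    _ = G' 1 - G 1 + (∫ θ in 0..π, G (cos θ)) / π := by
      rw [intervalIntegral.integral_div, by_parts, add_div, mul_div_cancel_left₀ _ pi_ne_zero]

theorem integral_mul_one_add_pow (n : ℕ) :
    ∫ u in (-1)..1, arcCosineProfile u * (1 + u) ^ n =
      2 ^ (n + 1) / ((n + 1) * (n + 2)) *
        (n + 2 * ∏ i ∈ Finset.range (n + 2), (2 * (i : ℝ) + 1) / (2 * i + 2)) := by
  have hderiv (m : ℕ) (u : ℝ) :
      HasDerivAt (fun u : ℝ => (1 + u) ^ (m + 1) / (m + 1)) ((1 + u) ^ m) u := by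
    convert! (((hasDerivAt_id' u).const_add 1).pow (m + 1)).div_const ((m : ℝ) + 1) using 1
    push_cast
    field_simp
  rw [integral_mul_second_deriv
    (fun u _ => (hderiv (n + 1) u).div_const ((n : ℝ) + 1)) (fun u _ => hderiv n u) (by fun_prop)]
  simp only [intervalIntegral.integral_div, integral_one_add_cos_pow]
  push_cast
  field_simp
  ring

end arcCosineProfile

/-- **Optimal quadratic approximation coefficient.** For the arc-cosine kernel
profile `h(u) = (1/π)(u(π − arccos u) + √(1 − u²))`, the squared `L²` error
`e a = ∫_{−1}^{1} (h(u) − a(1+u)²)² du` has the unique minimizer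
`a* = 815/3072`: for every `a ≠ 815/3072`, `e (815/3072) < e a`. -/
theorem relu_profile_optimal_coefficient
    (h : ℝ → ℝ)
    (hh : ∀ u, h u = (1 / Real.pi) *
      (u * (Real.pi - Real.arccos u) + Real.sqrt (1 - u ^ 2)))
    (e : ℝ → ℝ)
    (he : ∀ a, e a = ∫ u in (-1 : ℝ)..1, (h u - a * (1 + u) ^ 2) ^ 2) :
    ∀ a : ℝ, a ≠ 815/3072 → e (815/3072) < e a := by
  obtain rfl : h = arcCosineProfile := funext hh
  have inner_eq : ∫ u in (-1)..1, arcCosineProfile u * (1 + u) ^ 2 = 163 / 96 := by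
    rw [arcCosineProfile.integral_mul_one_add_pow]
    norm_num [Finset.prod_range_succ]
  have norm_sq_eq : ∫ u in (-1 : ℝ)..1, ((1 + u) ^ 2) ^ 2 = 32 / 5 := by
    simp only [← pow_mul]
    rw [integral_comp_add_left (fun u => u ^ (2 * 2)), integral_pow]
    norm_num
  intro a ha
  rw [he, he]
  refine intervalIntegral_sq_sub_mul_lt (by norm_num) arcCosineProfile.continuous.continuousOn
    (by fun_prop) ?_ ?_ ha
  · rw [norm_sq_eq]
    norm_num
  · rw [inner_eq, norm_sq_eq]
    norm_num
end

section
/- For every u ∈ (−1, 1) and every a ∈ ℝ, the function E_a(u) := (1/(2160π²)) · [432π²a²u⁵ + 80(9π²(6a² − 4a + 1) − 17)u³ + 240(9π²a² + 11)u + 1080π²a(2a − 1)u⁴ + 2160π²a(2a − 1)u² − 15π√(1 − u²)(a(90u³ + 256u² + 207u − 64) − 128u² + 32) + 120(3πa(3u² + 8u + 6)u² − 12πu³ + 4(1 − 4u²)√(1 − u²))·arccos(u) − 1215πa·arcsin(u) + 720u³·arccos(u)²] is differentiable at u with derivative equal to (h(u) − a(1+u)²)², where h(u) = (1/π)·(u·(π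 − arccos(u)) + √(1 − u²)). -/
/-!
Write `κ u = √(1 - u ^ 2) - u * arccos u`. Then `π * h u = π * u + κ u`, so with
`q u = u - a * (1 + u) ^ 2` the squared error is `q ^ 2 + (2 / π) * q * κ + κ ^ 2 / π ^ 2`.
Since `κ' = -arccos`, two integrations by parts reduce the primitive of `u ^ n * κ u` to that of
`u ^ (n + 2) / √(1 - u ^ 2)`, which satisfies a two-step recursion in the exponent. The primitive of
`κ ^ 2` comes from expanding the square and differentiating `arccos` away in the same manner.
-/

section

open Real Set

theorem one_sub_sq_pos_of_mem_Ioo {R : Type*} [Ring R] [LinearOrder R] [IsStrictOrderedRing R]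
    {x : R} (hx : x ∈ Ioo (-1) 1) : 0 < 1 - x ^ 2 :=
  sub_pos.2 ((sq_lt_one_iff_abs_lt_one x).2 (abs_lt.2 hx))

variable {u : ℝ}

theorem hasDerivAt_sqrt_one_sub_sq (hu : u ∈ Ioo (-1) 1) :
    HasDerivAt (fun x : ℝ => √(1 - x ^ 2)) (-(u / √(1 - u ^ 2))) u := by
  have hpos := one_sub_sq_pos_of_mem_Ioo hu
  refine (((hasDerivAt_pow 2 u).const_sub 1).sqrt hpos.ne').congr_deriv ?_
  have hsqrt := (sqrt_pos.2 hpos).ne'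
  field_simp
  norm_num

theorem hasDerivAt_mul_arccos {F : ℝ → ℝ} {f : ℝ} (hF : HasDerivAt F f u)
    (hu : u ∈ Ioo (-1) 1) :
    HasDerivAt (fun x => F x * arccos x) (f * arccos u - F u / √(1 - u ^ 2)) u :=
  (hF.fun_mul (hasDerivAt_arccos hu.1.ne' hu.2.ne)).congr_deriv (by ring)

/-- The tail integral `κ u = ∫ t in u..1, arccos t` in closed form; it equals `π * h (-u)` for the
arc-cosine kernel profile `h`, and is the non-polynomial part of `π * h u`. -/
noncomputable def arccosTail (u : ℝ) : ℝ :=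
  √(1 - u ^ 2) - u * arccos u

theorem hasDerivAt_arccosTail (hu : u ∈ Ioo (-1) 1) :
    HasDerivAt arccosTail (-arccos u) u :=
  ((hasDerivAt_sqrt_one_sub_sq hu).sub (hasDerivAt_mul_arccos (hasDerivAt_id' u) hu)).congr_deriv
    (by ring)

theorem hasDerivAt_pow_mul_sqrt_one_sub_sq (n : ℕ) (hu : u ∈ Ioo (-1) 1) :
    HasDerivAt (fun x : ℝ => x ^ (n + 1) * √(1 - x ^ 2))
      (((n + 1) * u ^ n - (n + 2) * u ^ (n + 2)) / √(1 - u ^ 2)) u := by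
  have hpos := one_sub_sq_pos_of_mem_Ioo hu
  have hsqrt := (sqrt_pos.2 hpos).ne'
  refine ((hasDerivAt_pow (n + 1) u).fun_mul (hasDerivAt_sqrt_one_sub_sq hu)).congr_deriv ?_
  field_simp
  rw [sq_sqrt hpos.le]
  push_cast
  ring

/-- A primitive of `u ^ n / √(1 - u ^ 2)` on `(-1, 1)`, by the reduction formula in `n`. -/
noncomputable def powDivSqrtPrimitive : ℕ → ℝ → ℝ
  | 0, u => arcsin u
  | 1, u => -√(1 - u ^ 2)
  | n + 2, u => ((n + 1) * powDivSqrtPrimitive n u - u ^ (n + 1) * √(1 - u ^ 2)) / (n + 2)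

theorem hasDerivAt_powDivSqrtPrimitive (hu : u ∈ Ioo (-1) 1) :
    ∀ n : ℕ, HasDerivAt (powDivSqrtPrimitive n) (u ^ n / √(1 - u ^ 2)) u
  | 0 => by simpa [powDivSqrtPrimitive] using hasDerivAt_arcsin hu.1.ne' hu.2.ne
  | 1 => by simpa [powDivSqrtPrimitive] using (hasDerivAt_sqrt_one_sub_sq hu).fun_neg
  | n + 2 => by
    have hrec := (((hasDerivAt_powDivSqrtPrimitive hu n).const_mul (n + 1 : ℝ)).fun_sub
      (hasDerivAt_pow_mul_sqrt_one_sub_sq n hu)).div_const (n + 2 : ℝ)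
    refine hrec.congr_deriv ?_
    field_simp
    ring

/-- A primitive of `u ^ n * arccosTail u` on `(-1, 1)`, obtained by integrating `u ^ n` twice by
parts. -/
noncomputable def powMulArccosTailPrimitive (n : ℕ) (u : ℝ) : ℝ :=
  u ^ (n + 1) / (n + 1) * arccosTail u +
    (u ^ (n + 2) * arccos u + powDivSqrtPrimitive (n + 2) u) / ((n + 1) * (n + 2))

theorem hasDerivAt_powMulArccosTailPrimitive (n : ℕ) (hu : u ∈ Ioo (-1) 1) :
    HasDerivAt (powMulArccosTailPrimitive n) (u ^ n * arccosTail u) u := by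
  have hpow : HasDerivAt (fun x : ℝ => x ^ (n + 1) / (n + 1)) (u ^ n) u := by
    refine ((hasDerivAt_pow (n + 1) u).div_const (n + 1 : ℝ)).congr_deriv ?_
    push_cast
    field_simp
  have hboundary := hpow.fun_mul (hasDerivAt_arccosTail hu)
  have hremainder := (hasDerivAt_mul_arccos (hasDerivAt_pow (n + 2) u) hu).fun_add
    (hasDerivAt_powDivSqrtPrimitive hu (n + 2))
  refine (hboundary.fun_add (hremainder.div_const ((n + 1) * (n + 2) : ℝ))).congr_deriv ?_
  simp only [Nat.add_one_sub_one]
  push_cast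
  field_simp
  ring

theorem powMulArccosTailPrimitive_zero (u : ℝ) :
    powMulArccosTailPrimitive 0 u =
      3 / 4 * u * √(1 - u ^ 2) - u ^ 2 / 2 * arccos u + arcsin u / 4 := by
  simp only [powMulArccosTailPrimitive, powDivSqrtPrimitive, arccosTail]
  push_cast
  ring

theorem powMulArccosTailPrimitive_one (u : ℝ) :
    powMulArccosTailPrimitive 1 u =
      (4 * u ^ 2 - 1) / 9 * √(1 - u ^ 2) - u ^ 3 / 3 * arccos u := by
  simp only [powMulArccosTailPrimitive, powDivSqrtPrimitive, arccosTail]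
  push_cast
  ring

theorem powMulArccosTailPrimitive_two (u : ℝ) :
    powMulArccosTailPrimitive 2 u =
      (10 * u ^ 3 - u) / 32 * √(1 - u ^ 2) - u ^ 4 / 4 * arccos u + arcsin u / 32 := by
  simp only [powMulArccosTailPrimitive, powDivSqrtPrimitive, arccosTail]
  push_cast
  ring

/-- A primitive of `arccosTail u ^ 2` on `(-1, 1)`. The coefficient of `arccos u` is
`2 / 3 * (√(1 - u ^ 2) ^ 3 + powDivSqrtPrimitive 3 u)`: the cube integrates the mixed term of the
square by parts, and the second summand cancels the linear `arccos` term in the derivative of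
`u ^ 3 / 3 * arccos u ^ 2`. -/
noncomputable def arccosTailSqPrimitive (u : ℝ) : ℝ :=
  u ^ 3 / 3 * arccos u ^ 2 + 2 / 9 * (1 - 4 * u ^ 2) * √(1 - u ^ 2) * arccos u +
    11 / 9 * u - 17 / 27 * u ^ 3

theorem hasDerivAt_arccosTailSqPrimitive (hu : u ∈ Ioo (-1) 1) :
    HasDerivAt arccosTailSqPrimitive (arccosTail u ^ 2) u := by
  have hpos := one_sub_sq_pos_of_mem_Ioo hu
  have hsqrt := (sqrt_pos.2 hpos).ne'
  have hcube : HasDerivAt (fun x : ℝ => x ^ 3 / 3) (u ^ 2) u :=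
    ((hasDerivAt_pow 3 u).div_const 3).congr_deriv (by norm_num)
  have harccos : HasDerivAt
      (fun x => 2 / 9 * (√(1 - x ^ 2) - 4 * (x ^ 2 * √(1 - x ^ 2))) * arccos x)
      (2 / 3 * (4 * u ^ 3 - 3 * u) / √(1 - u ^ 2) * arccos u - 2 / 9 * (1 - 4 * u ^ 2)) u := by
    have hcoeff := ((hasDerivAt_sqrt_one_sub_sq hu).fun_sub
      ((hasDerivAt_pow_mul_sqrt_one_sub_sq 1 hu).const_mul 4)).const_mul (2 / 9)
    refine (hasDerivAt_mul_arccos hcoeff hu).congr_deriv ?_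
    field_simp
    push_cast
    ring
  have harccosSq : HasDerivAt (fun x => x ^ 3 / 3 * arccos x * arccos x)
      (u ^ 2 * arccos u ^ 2 - 2 / 3 * u ^ 3 / √(1 - u ^ 2) * arccos u) u :=
    (hasDerivAt_mul_arccos (hasDerivAt_mul_arccos hcube hu) hu).congr_deriv (by ring)
  have hsum := ((harccosSq.fun_add harccos).fun_add ((hasDerivAt_id' u).const_mul (11 / 9))).fun_sub
    (hcube.const_mul (17 / 9))
  have hdiv : (u ^ 3 - u) / √(1 - u ^ 2) = -(u * √(1 - u ^ 2)) := by
    field_simp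
    rw [sq_sqrt hpos.le]
    ring
  refine (hsum.congr_deriv ?_).congr_of_eventuallyEq (.of_eq ?_)
  · simp only [arccosTail]
    linear_combination 2 * arccos u * hdiv - sq_sqrt hpos.le
  · ext x
    simp only [arccosTailSqPrimitive]
    ring

theorem hasDerivAt_quadratic_sq_primitive (α β γ u : ℝ) :
    HasDerivAt (fun x => α ^ 2 * x + α * β * x ^ 2 + (β ^ 2 + 2 * α * γ) / 3 * x ^ 3 +
      β * γ / 2 * x ^ 4 + γ ^ 2 / 5 * x ^ 5) ((α + β * u + γ * u ^ 2) ^ 2) u := by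
  have hmonomial (n : ℕ) (c : ℝ) := (hasDerivAt_pow n u).const_mul c
  refine ((((((hasDerivAt_id' u).const_mul (α ^ 2)).fun_add (hmonomial 2 _)).fun_add
    (hmonomial 3 _)).fun_add (hmonomial 4 _)).fun_add (hmonomial 5 _)).congr_deriv ?_
  push_cast
  ring

/-- A primitive of `(α + β * u + γ * u ^ 2 + arccosTail u / π) ^ 2` on `(-1, 1)`, the squared error
of a quadratic model of the arc-cosine kernel profile. The coefficients are those of the polynomial
part of the error, not of the model. -/
noncomputable def quadraticAddTailSqPrimitive (α β γ u : ℝ) : ℝ :=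
  α ^ 2 * u + α * β * u ^ 2 + (β ^ 2 + 2 * α * γ) / 3 * u ^ 3 + β * γ / 2 * u ^ 4 +
      γ ^ 2 / 5 * u ^ 5 +
    2 / π * (α * powMulArccosTailPrimitive 0 u + β * powMulArccosTailPrimitive 1 u +
      γ * powMulArccosTailPrimitive 2 u) +
    arccosTailSqPrimitive u / π ^ 2

theorem hasDerivAt_quadraticAddTailSqPrimitive (α β γ : ℝ) (hu : u ∈ Ioo (-1) 1) :
    HasDerivAt (quadraticAddTailSqPrimitive α β γ)
      ((α + β * u + γ * u ^ 2 + arccosTail u / π) ^ 2) u := by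
  have hmoment (n : ℕ) (c : ℝ) := (hasDerivAt_powMulArccosTailPrimitive n hu).const_mul c
  have hcross := ((hmoment 0 α).fun_add (hmoment 1 β)).fun_add (hmoment 2 γ)
  exact (((hasDerivAt_quadratic_sq_primitive α β γ u).add (hcross.const_mul (2 / π))).add
    ((hasDerivAt_arccosTailSqPrimitive hu).div_const (π ^ 2))).congr_deriv (by ring)

end

/-- **Antiderivative of the squared approximation error.** For every `a ∈ ℝ`
and every `u ∈ (−1, 1)`, the function `E_a` below is differentiable at `u`
with derivative `(h(u) − a(1+u)²)²`, where
`h(u) = (1/π)(u(π − arccos u) + √(1 − u²))`. -/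
theorem relu_profile_error_antiderivative
    (h : ℝ → ℝ)
    (hh : ∀ u, h u = (1 / Real.pi) *
      (u * (Real.pi - Real.arccos u) + Real.sqrt (1 - u ^ 2)))
    (E : ℝ → ℝ → ℝ)
    (hE : ∀ a u, E a u = (1 / (2160 * Real.pi ^ 2)) *
      (432 * Real.pi ^ 2 * a ^ 2 * u ^ 5
        + 80 * (9 * Real.pi ^ 2 * (6 * a ^ 2 - 4 * a + 1) - 17) * u ^ 3
        + 240 * (9 * Real.pi ^ 2 * a ^ 2 + 11) * u
        + 1080 * Real.pi ^ 2 * a * (2 * a - 1) * u ^ 4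
        + 2160 * Real.pi ^ 2 * a * (2 * a - 1) * u ^ 2
        - 15 * Real.pi * Real.sqrt (1 - u ^ 2) *
            (a * (90 * u ^ 3 + 256 * u ^ 2 + 207 * u - 64) - 128 * u ^ 2 + 32)
        + 120 * (3 * Real.pi * a * (3 * u ^ 2 + 8 * u + 6) * u ^ 2
            - 12 * Real.pi * u ^ 3
            + 4 * (1 - 4 * u ^ 2) * Real.sqrt (1 - u ^ 2)) * Real.arccos u
        - 1215 * Real.pi * a * Real.arcsin u
        + 720 * u ^ 3 * Real.arccos u ^ 2)) :
    ∀ a : ℝ, ∀ u ∈ Set.Ioo (-1 : ℝ) 1,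
      HasDerivAt (E a) ((h u - a * (1 + u) ^ 2) ^ 2) u := by
  intro a u hu
  have hprimitive : E a = quadraticAddTailSqPrimitive (-a) (1 - 2 * a) (-a) := by
    ext x
    simp only [hE, quadraticAddTailSqPrimitive, powMulArccosTailPrimitive_zero,
      powMulArccosTailPrimitive_one, powMulArccosTailPrimitive_two, arccosTailSqPrimitive]
    field_simp
    ring
  have herror : h u - a * (1 + u) ^ 2 =
      -a + (1 - 2 * a) * u + -a * u ^ 2 + arccosTail u / Real.pi := by
    simp only [hh, arccosTail]
    field_simp
    ring
  rw [hprimitive, herror]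
  exact hasDerivAt_quadraticAddTailSqPrimitive _ _ _ hu
end

section
/- Let v = (a₁μ₁, a₂μ₂) ∈ ℝ² with a₁μ₁ ≠ 0 and a₂μ₂ ≠ 0, let p = ½·δ_v + ½·δ_{−v}, and let γ(b₁, b₂) be the normalized alignment between the approximate-ReLU-kernel prediction function f and its availability-rescaled version g_b. For an integer m ≥ 1 and i ∈ {1, 2}, let ζᵢ := (∂ᵐ/∂bᵢᵐ) γ evaluated at b = (1, 1). Then for every m with 1 ≤ m ≤ 8, |ζ₁| − |ζ₂| = 0. -/
open MeasureTheory RealInnerProductSpace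
open scoped ENNReal

/-!
Under the symmetric law on `{v, -v}` the pair `(φ₁, φ₂)` is orthonormal, so the alignment of the
predictors at `v` and `w` is the cosine of the angle between `(1, 1)` and `(φ₁ w, φ₂ w)`. With `θ`
the angle between `w` and `v`, `(φ₁ w, φ₂ w)` is proportional to `((1 + cos² θ) / 2, cos θ)`, whence
the alignment is `1 / √(1 + tan⁸ (θ / 2))`. Along the line `w = v + (t - 1) • u` one has
`tan² (θ / 2) = (t - 1)² G / (‖w‖ ‖v‖ + ⟪w, v⟫)²`, where `G` is the Gram determinant of `u` and `v`.
Therefore the derivatives of order `1` to `7` at `t = 1` vanish and the eighth one depends on `u`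
only through `G`. Scaling one coordinate of `v` amounts to taking for `u` one of two vectors with
sum `v`, and these span with `v` parallelograms of the same area.
-/

theorem iteratedDeriv_sub_pow_mul {𝕜 : Type*} [NontriviallyNormedField 𝕜] {L : 𝕜 → 𝕜} {a : 𝕜}
    {m : ℕ} (n : ℕ) (hL : ContDiffAt 𝕜 m L a) :
    iteratedDeriv m (fun t => (t - a) ^ n * L t) a =
      m.descFactorial n * iteratedDeriv (m - n) L a := by
  have hpow (i : ℕ) : iteratedDeriv i (fun t => (t - a) ^ n) a =
      if i = n then (n.factorial : 𝕜) else 0 := by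
    simp only [iteratedDeriv_comp_sub_const i (fun t => t ^ n) a, sub_self,
      iteratedDeriv_fun_pow_zero, Nat.cast_ite, Nat.cast_zero]
  rw [iteratedDeriv_fun_mul (by fun_prop) hL, Nat.descFactorial_eq_factorial_mul_choose]
  simp only [hpow, mul_ite, ite_mul, mul_zero, zero_mul, Finset.sum_ite_eq', Finset.mem_range]
  split_ifs with hn
  · push_cast
    ring
  · simp [Nat.choose_eq_zero_of_lt (show m < n by lia)]

theorem one_div_sqrt_one_add {z : ℝ} (hz : 0 < 1 + z) :
    1 / √(1 + z) = 1 + z * -(√(1 + z) * (1 + √(1 + z)))⁻¹ := by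
  have hsq : √(1 + z) ^ 2 = 1 + z := Real.sq_sqrt hz.le
  field_simp
  linear_combination -hsq

theorem iteratedDeriv_one_div_sqrt_one_add_sub_pow_mul {q : ℝ → ℝ} {a : ℝ} {m n : ℕ}
    (hq : ContDiffAt ℝ m q a) (hm : 1 ≤ m) (hmn : m ≤ n) :
    iteratedDeriv m (fun t => 1 / √(1 + (t - a) ^ n * q t)) a =
      -(m.descFactorial n * q a / 2) := by
  let radicand (t : ℝ) : ℝ := 1 + (t - a) ^ n * q t
  let L (t : ℝ) : ℝ := q t * -(√(radicand t) * (1 + √(radicand t)))⁻¹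
  have hradicand : radicand a = 1 := by simp [radicand, show n ≠ 0 by lia]
  have hradicand_smooth : ContDiffAt ℝ m radicand a := by fun_prop
  have hsqrt : ContDiffAt ℝ m (fun t => √(radicand t)) a :=
    hradicand_smooth.sqrt (by simp [hradicand])
  have hL : ContDiffAt ℝ m L a :=
    hq.mul ((hsqrt.mul (contDiffAt_const.add hsqrt)).inv (by norm_num [hradicand])).neg
  have hexpand : (fun t => 1 / √(radicand t)) =ᶠ[nhds a] fun t => 1 + (t - a) ^ n * L t := by
    have hpos : ∀ᶠ t in nhds a, 0 < radicand t :=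
      hradicand_smooth.continuousAt.eventually (lt_mem_nhds (by simp [hradicand]))
    filter_upwards [hpos] with t ht
    rw [one_div_sqrt_one_add ht, mul_assoc]
  rw [hexpand.iteratedDeriv_eq, iteratedDeriv_const_add hm, iteratedDeriv_sub_pow_mul n hL,
    Nat.sub_eq_zero_of_le hmn, iteratedDeriv_zero]
  simp only [L, hradicand, Real.sqrt_one]
  ring

theorem add_div_sqrt_two_mul_sqrt_sq_add_sq {x y : ℝ} (h : 0 < x + y) :
    (x + y) / (√2 * √(x ^ 2 + y ^ 2)) = 1 / √(1 + ((x - y) / (x + y)) ^ 2) := by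
  have hratio : 1 + ((x - y) / (x + y)) ^ 2 = 2 * (x ^ 2 + y ^ 2) / (x + y) ^ 2 := by
    field_simp
    ring
  rw [hratio, Real.sqrt_div (by positivity), Real.sqrt_sq h.le, Real.sqrt_mul zero_le_two,
    one_div_div]

theorem integral_half_dirac_add_half_dirac {α F : Type*} [MeasurableSpace α]
    [MeasurableSingletonClass α] [NormedAddCommGroup F] [NormedSpace ℝ F] [CompleteSpace F]
    (h : α → F) (x y : α) :
    ∫ z, h z ∂((1 / 2 : ℝ≥0∞) • Measure.dirac x + (1 / 2 : ℝ≥0∞) • Measure.dirac y) =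
      (1 / 2 : ℝ) • (h x + h y) := by
  have hint (z : α) : Integrable h ((1 / 2 : ℝ≥0∞) • Measure.dirac z) :=
    (integrable_dirac enorm_lt_top).smul_measure (by simp)
  rw [integral_add_measure (hint x) (hint y), integral_smul_measure, integral_smul_measure,
    integral_dirac, integral_dirac, smul_add]
  simp

section InnerProductSpace

variable {E : Type*} [NormedAddCommGroup E] [InnerProductSpace ℝ E]

/-- The Gram determinant of two vectors, the squared area of the parallelogram they span. -/
noncomputable def gramDet (u v : E) : ℝ := (Matrix.gram ℝ ![u, v]).det

theorem gramDet_eq (u v : E) : gramDet u v = ‖u‖ ^ 2 * ‖v‖ ^ 2 - ⟪u, v⟫ ^ 2 := by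
  simp [gramDet, Matrix.det_fin_two, Matrix.gram_apply, real_inner_comm u v, sq]

theorem gramDet_add_smul_left (u v : E) (s : ℝ) :
    gramDet (v + s • u) v = s ^ 2 * gramDet u v := by
  simp only [gramDet_eq, ← real_inner_self_eq_norm_sq, inner_add_left, inner_add_right,
    real_inner_smul_left, real_inner_smul_right, real_inner_comm u v]
  ring

theorem gramDet_left_eq_gramDet_right_of_add_eq {u₁ u₂ v : E} (h : u₁ + u₂ = v) :
    gramDet u₁ v = gramDet u₂ v := by
  have hu₁ : u₁ = v + (-1 : ℝ) • u₂ := by simp [← h]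
  rw [hu₁, gramDet_add_smul_left]
  ring

/-- The function `tan² (θ / 2)` of the angle `θ` between two nonzero vectors, written as
`(1 - cos θ) / (1 + cos θ)` with denominators cleared. For `θ = π` it has the junk value `0`. -/
noncomputable def tanSqHalfAngle (w v : E) : ℝ := (‖w‖ * ‖v‖ - ⟪w, v⟫) / (‖w‖ * ‖v‖ + ⟪w, v⟫)

theorem tanSqHalfAngle_eq_gramDet_div (w v : E) :
    tanSqHalfAngle w v = gramDet w v / (‖w‖ * ‖v‖ + ⟪w, v⟫) ^ 2 := by
  rw [tanSqHalfAngle, gramDet_eq]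
  rcases eq_or_ne (‖w‖ * ‖v‖ + ⟪w, v⟫) 0 with h | h
  · simp [h]
  · field_simp
    ring

/-- The first eigenfunction `φ₁` of the kernel under the symmetric law on `{v, -v}`. -/
noncomputable def evenFeature (v x : E) : ℝ :=
  ‖x‖ / (2 * ‖v‖) * (1 + ⟪‖x‖⁻¹ • x, ‖v‖⁻¹ • v⟫ ^ 2)

/-- The second eigenfunction `φ₂` of the kernel under the symmetric law on `{v, -v}`. -/
noncomputable def oddFeature (v x : E) : ℝ := ⟪x, v⟫ / ‖v‖ ^ 2

theorem evenFeature_neg (v x : E) : evenFeature v (-x) = evenFeature v x := by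
  simp [evenFeature]

theorem oddFeature_neg (v x : E) : oddFeature v (-x) = -oddFeature v x := by
  simp [oddFeature, neg_div]

theorem evenFeature_self {v : E} (hv : v ≠ 0) : evenFeature v v = 1 := by
  have : ‖v‖ ≠ 0 := norm_ne_zero_iff.2 hv
  rw [evenFeature, real_inner_smul_left, real_inner_smul_right, real_inner_self_eq_norm_sq]
  field_simp
  norm_num

theorem oddFeature_self {v : E} (hv : v ≠ 0) : oddFeature v v = 1 := by
  rw [oddFeature, real_inner_self_eq_norm_sq, div_self (by simpa using hv)]

theorem evenFeature_add_oddFeature {v w : E} (hv : v ≠ 0) (hw : w ≠ 0) :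
    evenFeature v w + oddFeature v w =
      (‖w‖ * ‖v‖ + ⟪w, v⟫) ^ 2 / (2 * ‖w‖ * ‖v‖ ^ 3) := by
  rw [evenFeature, oddFeature, real_inner_smul_left, real_inner_smul_right]
  field_simp
  ring

theorem evenFeature_sub_oddFeature {v w : E} (hv : v ≠ 0) (hw : w ≠ 0) :
    evenFeature v w - oddFeature v w =
      (‖w‖ * ‖v‖ - ⟪w, v⟫) ^ 2 / (2 * ‖w‖ * ‖v‖ ^ 3) := by
  rw [evenFeature, oddFeature, real_inner_smul_left, real_inner_smul_right]
  field_simp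
  ring

/-- The prediction function built from the features of `w`: `f` is the case `w = v` and `g_b` the
case where `w` is the rescaled vector `w_b`. -/
noncomputable def predictor (v w x : E) : ℝ :=
  (1 / 2) * (evenFeature v x * evenFeature v w + oddFeature v x * oddFeature v w)

variable [MeasurableSpace E]

/-- The symmetric law on the two points `v` and `-v`. -/
noncomputable def antipodalLaw (v : E) : Measure E :=
  (1 / 2 : ℝ≥0∞) • Measure.dirac v + (1 / 2 : ℝ≥0∞) • Measure.dirac (-v)

/-- The normalized alignment (cosine similarity in `L²` of the antipodal law) of the predictors
built from `v` and from `w`; the alignment `γ b` is the case `w = w_b`. -/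
noncomputable def predictorAlignment (v w : E) : ℝ :=
  (∫ x, predictor v v x * predictor v w x ∂antipodalLaw v) /
    (√(∫ x, predictor v v x ^ 2 ∂antipodalLaw v) * √(∫ x, predictor v w x ^ 2 ∂antipodalLaw v))

variable [MeasurableSingletonClass E]

theorem integral_predictor_mul_predictor {v : E} (hv : v ≠ 0) (w w' : E) :
    ∫ x, predictor v w x * predictor v w' x ∂antipodalLaw v =
      (evenFeature v w * evenFeature v w' + oddFeature v w * oddFeature v w') / 4 := by
  rw [antipodalLaw, integral_half_dirac_add_half_dirac]
  simp only [predictor, evenFeature_neg, oddFeature_neg, evenFeature_self hv, oddFeature_self hv,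
    smul_eq_mul]
  ring

theorem predictorAlignment_eq_features {v : E} (hv : v ≠ 0) (w : E) :
    predictorAlignment v w = (evenFeature v w + oddFeature v w) /
      (√2 * √(evenFeature v w ^ 2 + oddFeature v w ^ 2)) := by
  have hsq (w' : E) : ∫ x, predictor v w' x ^ 2 ∂antipodalLaw v =
      (evenFeature v w' ^ 2 + oddFeature v w' ^ 2) / 4 := by
    simpa only [sq] using integral_predictor_mul_predictor hv w' w'
  have hquarter (z : ℝ) : √(z / 4) = √z / 2 := by
    rw [Real.sqrt_div' z (by norm_num), show (4 : ℝ) = 2 ^ 2 by norm_num, Real.sqrt_sq zero_le_two]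
  rw [predictorAlignment, integral_predictor_mul_predictor hv, hsq, hsq, hquarter, hquarter,
    evenFeature_self hv, oddFeature_self hv, one_mul, one_mul, one_pow, one_add_one_eq_two,
    div_mul_div_comm, show (2 : ℝ) * 2 = 4 by norm_num, div_div_div_cancel_right₀ (by norm_num)]

theorem predictorAlignment_eq_tanSqHalfAngle {v w : E} (h : 0 < ‖w‖ * ‖v‖ + ⟪w, v⟫) :
    predictorAlignment v w = 1 / √(1 + tanSqHalfAngle w v ^ 4) := by
  have hv : v ≠ 0 := by
    rintro rfl
    simp at h
  have hw : w ≠ 0 := by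
    rintro rfl
    simp at h
  have hadd := evenFeature_add_oddFeature hv hw
  have hpos : 0 < evenFeature v w + oddFeature v w := by
    rw [hadd]
    positivity
  have hratio : (evenFeature v w - oddFeature v w) / (evenFeature v w + oddFeature v w) =
      tanSqHalfAngle w v ^ 2 := by
    rw [hadd, evenFeature_sub_oddFeature hv hw, div_div_div_cancel_right₀ (by positivity),
      tanSqHalfAngle, div_pow]
  rw [predictorAlignment_eq_features hv, add_div_sqrt_two_mul_sqrt_sq_add_sq hpos,
    hratio, ← pow_mul]

theorem iteratedDeriv_predictorAlignment_line {v : E} (hv : v ≠ 0) (u : E) (a : ℝ) {m : ℕ}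
    (hm : 1 ≤ m) (hm8 : m ≤ 8) :
    iteratedDeriv m (fun t => predictorAlignment v (v + (t - a) • u)) a =
      -(m.descFactorial 8 * (gramDet u v / (4 * ‖v‖ ^ 4)) ^ 4 / 2) := by
  let line (t : ℝ) : E := v + (t - a) • u
  let d (t : ℝ) : ℝ := ‖line t‖ * ‖v‖ + ⟪line t, v⟫
  let q (t : ℝ) : ℝ := (gramDet u v / d t ^ 2) ^ 4
  have hline : line a = v := by simp [line]
  have hda : d a = 2 * ‖v‖ ^ 2 := by
    simp only [d, hline, real_inner_self_eq_norm_sq]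
    ring
  have hda_pos : 0 < d a := by
    rw [hda]
    positivity
  have hline_smooth : ContDiffAt ℝ m line a := by fun_prop
  have hd : ContDiffAt ℝ m d a :=
    ((hline_smooth.norm ℝ (by rwa [hline])).mul contDiffAt_const).add
      (hline_smooth.inner ℝ contDiffAt_const)
  have hq : ContDiffAt ℝ m q a := (contDiffAt_const.div (hd.pow 2) (by positivity)).pow 4
  have halignment : (fun t => predictorAlignment v (line t)) =ᶠ[nhds a]
      fun t => 1 / √(1 + (t - a) ^ 8 * q t) := by
    filter_upwards [hd.continuousAt.eventually (lt_mem_nhds hda_pos)] with t ht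
    rw [predictorAlignment_eq_tanSqHalfAngle ht, tanSqHalfAngle_eq_gramDet_div,
      gramDet_add_smul_left, mul_div_assoc, mul_pow, ← pow_mul]
  rw [halignment.iteratedDeriv_eq, iteratedDeriv_one_div_sqrt_one_add_sub_pow_mul hq hm hm8]
  simp only [q, hda]
  ring

theorem iteratedDeriv_predictorAlignment_eq_of_add_eq {u₁ u₂ v : E} (hv : v ≠ 0)
    (hadd : u₁ + u₂ = v) {m : ℕ} (hm : 1 ≤ m) (hm8 : m ≤ 8) :
    iteratedDeriv m (fun t : ℝ => predictorAlignment v (t • u₁ + (1 : ℝ) • u₂)) 1 =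
      iteratedDeriv m (fun t : ℝ => predictorAlignment v ((1 : ℝ) • u₁ + t • u₂)) 1 := by
  have hline₁ (t : ℝ) : t • u₁ + (1 : ℝ) • u₂ = v + (t - 1) • u₁ := by
    rw [← hadd]
    module
  have hline₂ (t : ℝ) : (1 : ℝ) • u₁ + t • u₂ = v + (t - 1) • u₂ := by
    rw [← hadd]
    module
  simp only [hline₁, hline₂]
  rw [iteratedDeriv_predictorAlignment_line hv u₁ 1 hm hm8,
    iteratedDeriv_predictorAlignment_line hv u₂ 1 hm hm8,
    gramDet_left_eq_gramDet_right_of_add_eq hadd]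

theorem relu_kernel_sensitivities_equal_up_to_eight_general
    {u₁ u₂ v : E} (hv : v ≠ 0) (hadd : u₁ + u₂ = v) {p : Measure E}
    (hp : p = (1 / 2 : ℝ≥0∞) • Measure.dirac v + (1 / 2 : ℝ≥0∞) • Measure.dirac (-v))
    {φ₁ φ₂ f : E → ℝ} {g : ℝ → ℝ → E → ℝ} {γ : ℝ → ℝ → ℝ}
    (hφ₁ : ∀ x, φ₁ x = (‖x‖ / (2 * ‖v‖)) * (1 + ⟪‖x‖⁻¹ • x, ‖v‖⁻¹ • v⟫ ^ 2))
    (hφ₂ : ∀ x, φ₂ x = ⟪x, v⟫ / ‖v‖ ^ 2)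
    (hf : ∀ x, f x = (1 / 2) * (φ₁ x * φ₁ v + φ₂ x * φ₂ v))
    (hg : ∀ b₁ b₂ x, g b₁ b₂ x =
      (1 / 2) * (φ₁ x * φ₁ (b₁ • u₁ + b₂ • u₂) + φ₂ x * φ₂ (b₁ • u₁ + b₂ • u₂)))
    (hγ : ∀ b₁ b₂, γ b₁ b₂ = (∫ x, f x * g b₁ b₂ x ∂p) /
      (√(∫ x, f x ^ 2 ∂p) * √(∫ x, g b₁ b₂ x ^ 2 ∂p)))
    {m : ℕ} (hm : 1 ≤ m) (hm8 : m ≤ 8) :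
    iteratedDeriv m (fun t => γ t 1) 1 = iteratedDeriv m (fun t => γ 1 t) 1 := by
  obtain rfl : φ₁ = evenFeature v := funext hφ₁
  obtain rfl : φ₂ = oddFeature v := funext hφ₂
  obtain rfl : f = predictor v v := funext hf
  obtain rfl : p = antipodalLaw v := hp
  obtain rfl : g = fun b₁ b₂ => predictor v (b₁ • u₁ + b₂ • u₂) :=
    funext₂ fun b₁ b₂ => funext (hg b₁ b₂)
  obtain rfl : γ = fun b₁ b₂ => predictorAlignment v (b₁ • u₁ + b₂ • u₂) := funext₂ hγ
  exact iteratedDeriv_predictorAlignment_eq_of_add_eq hv hadd hm hm8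

end InnerProductSpace

theorem rescaled_eq_smul_add_smul (b₁ b₂ x y : ℝ) :
    (WithLp.equiv 2 (Fin 2 → ℝ)).symm ![b₁ * x, b₂ * y] = b₁ • !₂[x, 0] + b₂ • !₂[0, y] := by
  ext i
  fin_cases i <;> simp

/-- **ReLU sensitivities agree up to order 8.** For the normalized alignment
`γ` between the approximate-ReLU-kernel prediction function `f` and its
availability-rescaled version `g_b`, the order-`m` sensitivities
`ζᵢ = (∂ᵐ/∂bᵢᵐ) γ |_{b=(1,1)}` satisfy `|ζ₁| − |ζ₂| = 0` for every
`1 ≤ m ≤ 8`. -/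
theorem relu_kernel_sensitivities_equal_up_to_eight
    (a₁ a₂ μ₁ μ₂ : ℝ) (ha₁ : 0 < a₁) (ha₂ : 0 < a₂)
    (hm₁ : a₁ * μ₁ ≠ 0) (hm₂ : a₂ * μ₂ ≠ 0)
    (v : EuclideanSpace ℝ (Fin 2))
    (hv : v = (WithLp.equiv 2 (Fin 2 → ℝ)).symm ![a₁ * μ₁, a₂ * μ₂])
    (p : Measure (EuclideanSpace ℝ (Fin 2)))
    (hp : p = (1/2 : ℝ≥0∞) • Measure.dirac v + (1/2 : ℝ≥0∞) • Measure.dirac (-v))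
    (φ₁ φ₂ : EuclideanSpace ℝ (Fin 2) → ℝ)
    (hφ₁ : ∀ x, φ₁ x = (‖x‖ / (2 * ‖v‖)) * (1 + ⟪‖x‖⁻¹ • x, ‖v‖⁻¹ • v⟫ ^ 2))
    (hφ₂ : ∀ x, φ₂ x = ⟪x, v⟫ / ‖v‖ ^ 2)
    (f : EuclideanSpace ℝ (Fin 2) → ℝ)
    (hf : ∀ x, f x = (1/2) * (φ₁ x * φ₁ v + φ₂ x * φ₂ v))
    (g : ℝ → ℝ → EuclideanSpace ℝ (Fin 2) → ℝ)
    (hg : ∀ b₁ b₂ x, g b₁ b₂ x = (1/2) *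
      (φ₁ x * φ₁ ((WithLp.equiv 2 (Fin 2 → ℝ)).symm ![b₁ * (a₁ * μ₁), b₂ * (a₂ * μ₂)]) +
       φ₂ x * φ₂ ((WithLp.equiv 2 (Fin 2 → ℝ)).symm ![b₁ * (a₁ * μ₁), b₂ * (a₂ * μ₂)])))
    (γ : ℝ → ℝ → ℝ)
    (hγ : ∀ b₁ b₂, γ b₁ b₂ = (∫ x, f x * g b₁ b₂ x ∂p) /
      (Real.sqrt (∫ x, (f x) ^ 2 ∂p) * Real.sqrt (∫ x, (g b₁ b₂ x) ^ 2 ∂p))) :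
    ∀ m : ℕ, 1 ≤ m → m ≤ 8 →
      |iteratedDeriv m (fun t => γ t 1) 1| -
        |iteratedDeriv m (fun t => γ 1 t) 1| = 0 := by
  have hv₀ : v ≠ 0 := fun h => hm₁ (by simpa [hv] using congrArg (fun x => x 0) h)
  have hadd : !₂[a₁ * μ₁, 0] + !₂[0, a₂ * μ₂] = v := by
    simpa [hv] using (rescaled_eq_smul_add_smul 1 1 (a₁ * μ₁) (a₂ * μ₂)).symm
  simp only [rescaled_eq_smul_add_smul] at hg
  exact fun m hm hm8 => sub_eq_zero.2 <| congrArg abs <|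
    relu_kernel_sensitivities_equal_up_to_eight_general hv₀ hadd hp hφ₁ hφ₂ hf hg hγ hm hm8
end
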